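/- arXiv:2605.20935 — 5 statements merged into one kernel-verified Lean document; each statement's English description precedes it below -/
import Mathlib

section
/- Let k ≥ 1 and let P : ℂ^k → ℂ^k be a map each of whose components is the evaluation of a multivariate polynomial in k variables over ℂ. Suppose there exist a constant C ≥ 0 and a real number α < 2 such that log⁺‖P(z)‖ ≤ α·log⁺‖z‖ + C for all z ∈ ℂ^k. Then every component of P has total degree at most 1; in other words, P is an affine map, i.e. of the form P(z) = A z + b with A a ℂ-linear endomorphism of ℂ^k and b ∈ ℂ^k. -/
/-!
Restricted to a line `t ↦ t • w` through the origin, a polynomial in several variables becomes a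
univariate polynomial whose coefficient of `tⁿ` is the value at `w` of the homogeneous component of
degree `n`. The growth bound gives `‖P (t • w)‖ = o(‖t‖ ^ 2)` as `t → ∞`, so every homogeneous
component of degree at least `2` vanishes at every `w`, hence is zero.
-/

open Asymptotics Bornology Filter Polynomial
open scoped ENNReal

section LineRestriction

variable {σ R : Type*} [CommSemiring R]

/-- The restriction of `p` to the line through the origin directed by `w`, that is `p (t • w)` as a
univariate polynomial in `t`. It reduces growth questions about `p` to one variable. -/
noncomputable def lineRestriction (p : MvPolynomial σ R) (w : σ → R) : R[X] :=
  MvPolynomial.aeval (fun i => C (w i) * X) p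

lemma eval_lineRestriction (p : MvPolynomial σ R) (w : σ → R) (t : R) :
    (lineRestriction p w).eval t = MvPolynomial.eval (t • w) p := by
  induction p using MvPolynomial.induction_on with
  | C a => simp [lineRestriction]
  | add p q hp hq => simp_all [lineRestriction]
  | mul_X p i hp => simp_all [lineRestriction, mul_comm t]

lemma lineRestriction_monomial (d : σ →₀ ℕ) (a : R) (w : σ → R) :
    lineRestriction (MvPolynomial.monomial d a) w =
      C (MvPolynomial.eval w (MvPolynomial.monomial d a)) * X ^ d.degree := by
  simp only [lineRestriction, MvPolynomial.aeval_monomial, MvPolynomial.eval_monomial,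
    Finsupp.prod, mul_pow, Finset.prod_mul_distrib, Finset.prod_pow_eq_pow_sum,
    Finsupp.degree_apply, map_mul, map_prod, map_pow, algebraMap_eq, mul_assoc]

lemma coeff_lineRestriction (p : MvPolynomial σ R) (w : σ → R) (n : ℕ) :
    (lineRestriction p w).coeff n =
      MvPolynomial.eval w (MvPolynomial.homogeneousComponent n p) := by
  induction p using MvPolynomial.induction_on' with
  | monomial d a =>
    rw [lineRestriction_monomial, coeff_C_mul_X_pow, MvPolynomial.homogeneousComponent_of_mem
      (MvPolynomial.isHomogeneous_monomial a rfl)]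
    split_ifs <;> simp
  | add p q hp hq => simp_all [lineRestriction]

end LineRestriction

section Degree

lemma totalDegree_le_of_homogeneousComponent_eq_zero {σ R : Type*} [CommSemiring R]
    {p : MvPolynomial σ R} {d : ℕ}
    (h : ∀ n, d < n → MvPolynomial.homogeneousComponent n p = 0) : p.totalDegree ≤ d := by
  suffices hle : ∀ s ∈ p.support, s.degree ≤ d from Finset.sup_le hle
  intro s hs
  by_contra! hds
  have hcoeff : MvPolynomial.coeff s (MvPolynomial.homogeneousComponent s.degree p) = 0 := by
    rw [h _ hds, MvPolynomial.coeff_zero]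
  rw [MvPolynomial.coeff_homogeneousComponent, if_pos rfl] at hcoeff
  exact MvPolynomial.mem_support_iff.1 hs hcoeff

variable {𝕜 : Type*} [NontriviallyNormedField 𝕜]

lemma degree_lt_of_isLittleO_pow {q : 𝕜[X]} {n : ℕ}
    (h : q.eval =o[cobounded 𝕜] fun t => t ^ n) : q.degree < n := by
  by_contra! hn
  have hpow : (fun t : 𝕜 => t ^ n) =O[cobounded 𝕜] q.eval := by
    simpa using isBigO_cobounded_of_degree_le ((degree_X_pow n).trans_le hn)
  have hne : ∀ᶠ t in cobounded 𝕜, t ^ n ≠ 0 :=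
    (eventually_ne_cobounded 0).mono fun t ht => pow_ne_zero n ht
  exact hpow.not_isLittleO hne.frequently h

lemma totalDegree_le_of_isLittleO_pow {σ : Type*} {p : MvPolynomial σ 𝕜} {d : ℕ}
    (h : ∀ w : σ → 𝕜,
      (fun t => MvPolynomial.eval (t • w) p) =o[cobounded 𝕜] fun t => t ^ (d + 1)) :
    p.totalDegree ≤ d := by
  refine totalDegree_le_of_homogeneousComponent_eq_zero fun n hn => MvPolynomial.funext fun w => ?_
  have hdeg : (lineRestriction p w).degree < (d + 1 : ℕ) :=
    degree_lt_of_isLittleO_pow ((h w).congr_left fun t => (eval_lineRestriction p w t).symm)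
  rw [← coeff_lineRestriction, map_zero]
  exact coeff_eq_zero_of_degree_lt (hdeg.trans_le (by exact_mod_cast hn))

end Degree

lemma eval_eq_of_totalDegree_le_one {σ R : Type*} [Fintype σ] [CommSemiring R]
    {p : MvPolynomial σ R} (hp : p.totalDegree ≤ 1) (z : σ → R) :
    MvPolynomial.eval z p = ∑ j, p.coeff (Finsupp.single j 1) * z j + p.coeff 0 := by
  classical
  have hsupp : p.support ⊆ insert 0 (Finset.univ.image fun j => Finsupp.single j 1) := by
    intro d hd
    rcases Nat.le_one_iff_eq_zero_or_eq_one.1 ((MvPolynomial.le_totalDegree hd).trans hp) with h | h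
    · simp [(Finsupp.degree_eq_zero_iff d).1 h]
    · obtain ⟨j, rfl⟩ := (Finsupp.sum_eq_one_iff d).1 h
      simp
  rw [MvPolynomial.eval_eq', Finset.sum_subset hsupp fun d _ hd => by
      rw [MvPolynomial.notMem_support_iff.1 hd, zero_mul],
    Finset.sum_insert (by simp),
    Finset.sum_image (Finsupp.single_left_injective one_ne_zero).injOn]
  simp [Finsupp.single_apply, pow_ite, add_comm]

section Growth

open Real

lemma isBigO_rpow_of_posLog_le {E F : Type*} [SeminormedAddCommGroup E] [SeminormedAddCommGroup F]
    {f : E → F} {α C : ℝ} (h : ∀ z, log⁺ ‖f z‖ ≤ α * log⁺ ‖z‖ + C) :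
    f =O[cobounded E] fun z => ‖z‖ ^ α := by
  refine .of_bound (exp C) ?_
  filter_upwards [eventually_cobounded_le_norm 1] with z hz
  have hlog : log ‖f z‖ ≤ C + log ‖z‖ * α :=
    calc log ‖f z‖ ≤ log⁺ ‖f z‖ := le_max_right _ _
      _ ≤ α * log⁺ ‖z‖ + C := h z
      _ = C + log ‖z‖ * α := by rw [posLog_eq_log (hz.trans (le_abs_self _))]; ring
  calc ‖f z‖ ≤ exp (log ‖f z‖) := le_exp_log _
    _ ≤ exp (C + log ‖z‖ * α) := exp_le_exp.2 hlog
    _ = exp C * ‖z‖ ^ α := by rw [exp_add, rpow_def_of_pos (one_pos.trans_le hz)]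
    _ = exp C * ‖‖z‖ ^ α‖ := by rw [norm_of_nonneg (by positivity)]

lemma isLittleO_rpow_rpow_atTop {a b : ℝ} (hab : a < b) :
    (fun x : ℝ => x ^ a) =o[atTop] fun x => x ^ b := by
  have hne : ∀ᶠ x : ℝ in atTop, x ^ b ≠ 0 :=
    (eventually_gt_atTop 0).mono fun x hx => (rpow_pos_of_pos hx b).ne'
  refine (isLittleO_iff_tendsto' (hne.mono fun x hx h => absurd h hx)).2 ?_
  refine (tendsto_rpow_neg_atTop (sub_pos.2 hab)).congr' ?_
  filter_upwards [eventually_gt_atTop 0] with x hx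
  rw [neg_sub, rpow_sub hx]

lemma isLittleO_norm_pow_of_posLog_le {E F : Type*} [SeminormedAddCommGroup E]
    [SeminormedAddCommGroup F] {f : E → F} {α C : ℝ} {n : ℕ} (hα : α < n)
    (h : ∀ z, log⁺ ‖f z‖ ≤ α * log⁺ ‖z‖ + C) :
    f =o[cobounded E] fun z => ‖z‖ ^ n := by
  have hpow : (fun x : ℝ => x ^ α) =o[atTop] fun x => x ^ n := by
    simpa using isLittleO_rpow_rpow_atTop hα
  exact (isBigO_rpow_of_posLog_le h).trans_isLittleO <|
    hpow.comp_tendsto tendsto_norm_cobounded_atTop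

variable {𝕜 : Type*} [NormedField 𝕜]

lemma tendsto_smul_const_cobounded {E : Type*} [NormedAddCommGroup E] [NormedSpace 𝕜 E] {w : E}
    (hw : w ≠ 0) : Tendsto (fun t : 𝕜 => t • w) (cobounded 𝕜) (cobounded E) := by
  simpa only [← tendsto_norm_atTop_iff_cobounded, norm_smul] using
    tendsto_norm_cobounded_atTop.atTop_mul_const (norm_pos_iff.2 hw)

lemma isLittleO_pow_comp_smul_of_posLog_le {E F : Type*} [NormedAddCommGroup E] [NormedSpace 𝕜 E]
    [SeminormedAddCommGroup F] {f : E → F} {α C : ℝ} {d : ℕ} (hα : α < d + 1)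
    (h : ∀ z, log⁺ ‖f z‖ ≤ α * log⁺ ‖z‖ + C) (w : E) :
    (fun t : 𝕜 => f (t • w)) =o[cobounded 𝕜] fun t => t ^ (d + 1) := by
  rcases eq_or_ne w 0 with rfl | hw
  · have hone : (fun _ : 𝕜 => (1 : 𝕜)) =o[cobounded 𝕜] fun t => t ^ (d + 1) := by
      simpa only [pow_zero] using isLittleO_pow_pow_cobounded_of_lt d.succ_pos
    simpa only [smul_zero] using (isBigO_const_one 𝕜 (f 0) _).trans_isLittleO hone
  · have hline : (fun t : 𝕜 => f (t • w)) =o[cobounded 𝕜] fun t => ‖t • w‖ ^ (d + 1) :=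
      (isLittleO_norm_pow_of_posLog_le (by exact_mod_cast hα) h).comp_tendsto
        (tendsto_smul_const_cobounded hw)
    refine hline.trans_isBigO (.of_bound (‖w‖ ^ (d + 1)) (.of_forall fun t => ?_))
    rw [norm_pow, norm_norm, norm_smul, norm_pow, mul_pow, mul_comm]

end Growth

section PolynomialMap

open Real

variable {𝕜 : Type*} [NontriviallyNormedField 𝕜]
variable {ι κ : Type*} [Fintype ι] [Fintype κ] {r s : ℝ≥0∞} [Fact (1 ≤ r)] [Fact (1 ≤ s)]

lemma totalDegree_le_of_posLog_le {P : PiLp r (fun _ : ι => 𝕜) → PiLp s (fun _ : κ => 𝕜)}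
    {p : κ → MvPolynomial ι 𝕜} (hP : ∀ z i, P z i = MvPolynomial.eval (fun j => z j) (p i))
    {C α : ℝ} {d : ℕ} (hα : α < d + 1) (hbound : ∀ z, log⁺ ‖P z‖ ≤ α * log⁺ ‖z‖ + C) (i : κ) :
    (p i).totalDegree ≤ d := by
  refine totalDegree_le_of_isLittleO_pow fun w => ?_
  have hcomp : (fun t : 𝕜 => P (t • WithLp.toLp r w) i) =O[cobounded 𝕜]
      fun t => P (t • WithLp.toLp r w) :=
    isBigO_of_le _ fun t => PiLp.norm_apply_le _ i
  exact (hcomp.trans_isLittleO (isLittleO_pow_comp_smul_of_posLog_le hα hbound _)).congr_left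
    fun t => hP _ i

theorem polynomial_map_subquadratic_growth_affine_general
    (P : PiLp r (fun _ : ι => 𝕜) → PiLp s (fun _ : κ => 𝕜)) (p : κ → MvPolynomial ι 𝕜)
    (hP : ∀ z i, P z i = MvPolynomial.eval (fun j => z j) (p i))
    (C α : ℝ) (hα : α < 2) (hbound : ∀ z, log⁺ ‖P z‖ ≤ α * log⁺ ‖z‖ + C) :
    (∀ i, (p i).totalDegree ≤ 1) ∧
    ∃ (A : PiLp r (fun _ : ι => 𝕜) →ₗ[𝕜] PiLp s (fun _ : κ => 𝕜))
      (b : PiLp s (fun _ : κ => 𝕜)), ∀ z, P z = A z + b := by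
  classical
  have hdeg : ∀ i, (p i).totalDegree ≤ 1 :=
    totalDegree_le_of_posLog_le hP (hα.trans_le (by norm_num)) hbound
  refine ⟨hdeg, Matrix.toLpLin r s (.of fun i j => (p i).coeff (Finsupp.single j 1)),
    WithLp.toLp s fun i => (p i).coeff 0, fun z => PiLp.ext fun i => ?_⟩
  rw [hP, eval_eq_of_totalDegree_le_one (hdeg i)]
  simp [Matrix.mulVec, dotProduct]

end PolynomialMap

/-- A polynomial self-map of `ℂ^k` with sub-quadratic logarithmic growth
`log⁺‖P(z)‖ ≤ α·log⁺‖z‖ + C`, `α < 2`, has all components of total degree at most `1`,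
i.e. it is an affine map `z ↦ A z + b`. -/
theorem polynomial_map_subquadratic_growth_affine (k : ℕ) (hk : 1 ≤ k)
    (P : EuclideanSpace ℂ (Fin k) → EuclideanSpace ℂ (Fin k))
    (p : Fin k → MvPolynomial (Fin k) ℂ)
    (hP : ∀ (z : EuclideanSpace ℂ (Fin k)) (i : Fin k),
      P z i = MvPolynomial.eval (fun j => z j) (p i))
    (C α : ℝ) (hC : 0 ≤ C) (hα : α < 2)
    (hbound : ∀ z : EuclideanSpace ℂ (Fin k),
      max (Real.log ‖P z‖) 0 ≤ α * max (Real.log ‖z‖) 0 + C) :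
    (∀ i, (p i).totalDegree ≤ 1) ∧
    ∃ (A : EuclideanSpace ℂ (Fin k) →ₗ[ℂ] EuclideanSpace ℂ (Fin k))
      (b : EuclideanSpace ℂ (Fin k)), ∀ z, P z = A z + b := by
  refine polynomial_map_subquadratic_growth_affine_general P p hP C α hα fun z => ?_
  simpa only [Real.posLog_apply, max_comm] using hbound z
end

section
/- Let k ≥ 1 and let f, g : ℂ^k → ℂ^k be bijections such that f is a polynomial map (each component a multivariate polynomial) and the inverse g⁻¹ is a polynomial map of degree at most δ_g. Let d_f, d_g, δ_f, δ_g be real numbers > 1 with d_f ≤ d_g and δ_g < 2·δ_f. Suppose there exist functions G⁺, G⁻ : ℂ^k → [0,∞) and a constant C₁ ≥ 0 such that for all z ∈ ℂ^k: G⁺(f(z)) = d_f·G⁺(z), G⁺(g(z)) = d_g·G⁺(z), G⁻(f(z)) = δ_f⁻¹·G⁻(z), and |max(G⁺(z), G⁻(z)) − log⁺‖z‖| ≤ C₁. Then f∘g⁻¹ is an affine map (each of its components is a polynomial of total degree at most 1), and G⁺(f(g⁻¹(z))) = (d_f/d_g)·G⁺(z) for all z. -/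
/-!
On the scale of `log⁺ ‖z‖`, a polynomial map of degree `d` grows at most like `d · log⁺ ‖z‖`, and
conversely this growth bounds its degree. The functional equations determine the growth of
`f ∘ g⁻¹`: up to a bounded error, `log⁺ ‖f (g⁻¹ z)‖` is the maximum of
`G⁺ (f (g⁻¹ z)) = (d_f / d_g) · G⁺ z`, which is at most `(d_f / d_g) · log⁺ ‖z‖`, and of
`G⁻ (f (g⁻¹ z)) = δ_f⁻¹ · G⁻ (g⁻¹ z)`, which is at most `(δ_g / δ_f) · log⁺ ‖z‖`. Both ratios
are smaller than `2`, so `f ∘ g⁻¹` has degree at most one.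
-/

open Filter Bornology Asymptotics Real

/-- Polynomial growth of order at most `s`, that is `‖f z‖ = O((max 1 ‖z‖) ^ s)` uniformly in `z`,
written on the logarithmic scale of the Green functions; `log⁺` makes zeros of `f` harmless. -/
def PolyGrowthLE {E F : Type*} [Norm E] [Norm F] (f : E → F) (s : ℝ) : Prop :=
  ∃ C, ∀ z, log⁺ ‖f z‖ ≤ s * log⁺ ‖z‖ + C

namespace PolyGrowthLE

lemma comp {E F G : Type*} [Norm E] [Norm F] [Norm G] {f : F → G} {h : E → F} {s t : ℝ}
    (hf : PolyGrowthLE f s) (hh : PolyGrowthLE h t) (hs : 0 ≤ s) :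
    PolyGrowthLE (f ∘ h) (s * t) := by
  obtain ⟨A, hA⟩ := hf
  obtain ⟨B, hB⟩ := hh
  refine ⟨s * B + A, fun z ↦ ?_⟩
  calc log⁺ ‖f (h z)‖ ≤ s * log⁺ ‖h z‖ + A := hA (h z)
    _ ≤ s * (t * log⁺ ‖z‖ + B) + A := by gcongr; exact hB z
    _ = s * t * log⁺ ‖z‖ + (s * B + A) := by ring

lemma pi {E ι : Type*} [Norm E] [Fintype ι] {F : ι → Type*} [∀ i, SeminormedAddCommGroup (F i)]
    {f : E → ∀ i, F i} {s : ℝ} (hs : 0 ≤ s) (hf : ∀ i, PolyGrowthLE (fun z ↦ f z i) s) :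
    PolyGrowthLE f s := by
  choose C hC using hf
  refine ⟨∑ i, |C i|, fun z ↦ ?_⟩
  have hpos : 0 ≤ s * log⁺ ‖z‖ + ∑ i, |C i| :=
    add_nonneg (mul_nonneg hs posLog_nonneg) (Finset.sum_nonneg fun i _ ↦ abs_nonneg (C i))
  obtain hι | hι := isEmpty_or_nonempty ι
  · rwa [Subsingleton.elim (f z) 0, norm_zero, posLog_zero]
  · obtain ⟨i, hi⟩ := Finite.exists_max fun i ↦ ‖f z i‖
    calc log⁺ ‖f z‖ ≤ log⁺ ‖f z i‖ :=
          posLog_le_posLog (norm_nonneg _) ((pi_norm_le_iff_of_nonneg (norm_nonneg _)).2 hi)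
      _ ≤ s * log⁺ ‖z‖ + C i := hC i z
      _ ≤ s * log⁺ ‖z‖ + ∑ i, |C i| := by
          gcongr
          exact (le_abs_self _).trans
            (Finset.single_le_sum (fun j _ ↦ abs_nonneg (C j)) (Finset.mem_univ i))

lemma mono {E F : Type*} [Norm E] [Norm F] {f : E → F} {s t : ℝ} (hf : PolyGrowthLE f s)
    (hst : s ≤ t) : PolyGrowthLE f t := by
  obtain ⟨C, hC⟩ := hf
  refine ⟨C, fun z ↦ (hC z).trans ?_⟩
  gcongr
  exact posLog_nonneg

lemma of_continuousLinearMap {𝕜 E F : Type*} [NontriviallyNormedField 𝕜]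
    [SeminormedAddCommGroup E] [NormedSpace 𝕜 E] [SeminormedAddCommGroup F] [NormedSpace 𝕜 F]
    (L : E →L[𝕜] F) : PolyGrowthLE L 1 := by
  refine ⟨log⁺ ‖L‖, fun z ↦ ?_⟩
  calc log⁺ ‖L z‖ ≤ log⁺ (‖L‖ * ‖z‖) := posLog_le_posLog (norm_nonneg _) (L.le_opNorm z)
    _ ≤ log⁺ ‖L‖ + log⁺ ‖z‖ := posLog_mul
    _ = 1 * log⁺ ‖z‖ + log⁺ ‖L‖ := by ring

lemma comp_of_green {E : Type*} [Norm E] {f h : E → E} {Gp Gm : E → ℝ} {a b δ C : ℝ}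
    (ha : 0 ≤ a) (hb : 0 ≤ b) (hh : PolyGrowthLE h δ)
    (hGp : ∀ z, Gp (f (h z)) = a * Gp z) (hGm : ∀ z, Gm (f z) = b * Gm z)
    (hgrowth : ∀ z, |max (Gp z) (Gm z) - log⁺ ‖z‖| ≤ C) :
    PolyGrowthLE (f ∘ h) (max a (b * δ)) := by
  obtain ⟨B, hB⟩ := hh
  have lower (z : E) : log⁺ ‖z‖ ≤ max (Gp z) (Gm z) + C := by
    linarith [(abs_le.1 (hgrowth z)).1]
  have upper (z : E) : max (Gp z) (Gm z) ≤ log⁺ ‖z‖ + C := by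
    linarith [(abs_le.1 (hgrowth z)).2]
  refine ⟨max (a * C) (b * (B + C)) + C, fun z ↦ ?_⟩
  have hz : 0 ≤ log⁺ ‖z‖ := posLog_nonneg
  have forward : Gp (f (h z)) ≤ a * log⁺ ‖z‖ + a * C := by
    rw [hGp, ← mul_add]
    exact mul_le_mul_of_nonneg_left ((le_max_left _ _).trans (upper z)) ha
  have backward : Gm (f (h z)) ≤ b * δ * log⁺ ‖z‖ + b * (B + C) := by
    calc Gm (f (h z)) = b * Gm (h z) := hGm (h z)
      _ ≤ b * (log⁺ ‖h z‖ + C) := by gcongr; exact (le_max_right _ _).trans (upper (h z))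
      _ ≤ b * (δ * log⁺ ‖z‖ + B + C) := by gcongr; exact hB z
      _ = b * δ * log⁺ ‖z‖ + b * (B + C) := by ring
  calc log⁺ ‖f (h z)‖ ≤ max (Gp (f (h z))) (Gm (f (h z))) + C := lower (f (h z))
    _ ≤ max a (b * δ) * log⁺ ‖z‖ + max (a * C) (b * (B + C)) + C := by
        gcongr
        refine max_le (forward.trans ?_) (backward.trans ?_) <;> gcongr
        exacts [le_max_left _ _, le_max_left _ _, le_max_right _ _, le_max_right _ _]
    _ = max a (b * δ) * log⁺ ‖z‖ + (max (a * C) (b * (B + C)) + C) := add_assoc _ _ _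

lemma natDegree_le {𝕜 : Type*} [NontriviallyNormedField 𝕜] {P : Polynomial 𝕜} {s : ℝ}
    (hP : P ≠ 0) (h : PolyGrowthLE (fun t ↦ P.eval t) s) : (P.natDegree : ℝ) ≤ s := by
  obtain ⟨C, hC⟩ := h
  have pow_isBigO : (fun t ↦ t ^ P.natDegree) =O[cobounded 𝕜] fun t ↦ P.eval t :=
    (isBigO_self_const_mul (Polynomial.leadingCoeff_ne_zero.2 hP) _ _).trans
      Polynomial.isEquivalent_cobounded_leading_monomial.symm.isBigO
  obtain ⟨K, hK⟩ := pow_isBigO.bound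
  have bounded : ∀ᶠ t in cobounded 𝕜, (P.natDegree - s) * log⁺ ‖t‖ ≤ log⁺ K + C := by
    filter_upwards [hK] with t ht
    have : P.natDegree * log⁺ ‖t‖ ≤ log⁺ K + log⁺ ‖P.eval t‖ := by
      rw [← posLog_pow, ← norm_pow]
      exact (posLog_le_posLog (norm_nonneg _) ht).trans posLog_mul
    linarith [hC t]
  have log_tendsto : Tendsto (fun t : 𝕜 ↦ log⁺ ‖t‖) (cobounded 𝕜) atTop :=
    tendsto_atTop_mono (fun t ↦ le_max_right _ _)
      (tendsto_log_atTop.comp tendsto_norm_cobounded_atTop)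
  by_contra! hlt
  obtain ⟨t, hle, hgt⟩ := (bounded.and
    ((log_tendsto.const_mul_atTop (sub_pos.2 hlt)).eventually_gt_atTop (log⁺ K + C))).exists
  exact hle.not_gt hgt

end PolyGrowthLE

section MvPolynomial

open MvPolynomial

lemma norm_mvPolynomial_eval_le {R σ : Type*} [NormedCommRing R] [NormOneClass R] [Fintype σ]
    (p : MvPolynomial σ R) (z : σ → R) :
    ‖eval z p‖ ≤ (∑ d ∈ p.support, ‖p.coeff d‖) * max 1 ‖z‖ ^ p.totalDegree := by
  rw [eval_eq', Finset.sum_mul]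
  refine norm_sum_le_of_le _ fun d hd ↦ (norm_mul_le _ _).trans ?_
  gcongr
  calc ‖∏ i, z i ^ d i‖ ≤ ∏ i, ‖z i ^ d i‖ := Finset.norm_prod_le _ _
    _ ≤ ∏ i, max 1 ‖z‖ ^ d i := by
        gcongr with i
        refine (norm_pow_le _ _).trans ?_
        gcongr
        exact (norm_le_pi_norm z i).trans (le_max_right _ _)
    _ = max 1 ‖z‖ ^ d.degree := by rw [Finset.prod_pow_eq_pow_sum, Finsupp.degree_eq_sum]
    _ ≤ max 1 ‖z‖ ^ p.totalDegree :=
        pow_le_pow_right₀ (le_max_left _ _) (le_totalDegree hd)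

lemma polyGrowthLE_eval {R σ : Type*} [NormedCommRing R] [NormOneClass R] [Fintype σ]
    (p : MvPolynomial σ R) : PolyGrowthLE (fun z ↦ eval z p) p.totalDegree := by
  refine ⟨log⁺ (∑ d ∈ p.support, ‖p.coeff d‖), fun z ↦ ?_⟩
  have posLog_max_one : log⁺ (max 1 ‖z‖) = log⁺ ‖z‖ := by
    rw [posLog_eq_log_max_one (by positivity), posLog_eq_log_max_one (norm_nonneg z),
      max_eq_right (le_max_left 1 ‖z‖)]
  calc log⁺ ‖eval z p‖
      ≤ log⁺ ((∑ d ∈ p.support, ‖p.coeff d‖) * max 1 ‖z‖ ^ p.totalDegree) :=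
        posLog_le_posLog (norm_nonneg _) (norm_mvPolynomial_eval_le p z)
    _ ≤ log⁺ (∑ d ∈ p.support, ‖p.coeff d‖) + log⁺ (max 1 ‖z‖ ^ p.totalDegree) := posLog_mul
    _ = p.totalDegree * log⁺ ‖z‖ + log⁺ (∑ d ∈ p.support, ‖p.coeff d‖) := by
        rw [posLog_pow, posLog_max_one, add_comm]

/-- The restriction `t ↦ p (t z)` of a polynomial to the line spanned by `z`, as a polynomial in
the single variable `t`. -/
noncomputable def restrictLine {R σ : Type*} [CommSemiring R] (z : σ → R) :
    MvPolynomial σ R →ₐ[R] Polynomial R :=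
  aeval fun i ↦ Polynomial.C (z i) * Polynomial.X

lemma eval_restrictLine {R σ : Type*} [CommSemiring R] (z : σ → R) (p : MvPolynomial σ R) (t : R) :
    (restrictLine z p).eval t = eval (t • z) p := by
  have : (Polynomial.aeval t).comp (restrictLine z) = aeval (t • z) :=
    algHom_ext fun i ↦ by simp [restrictLine, mul_comm t]
  simpa [Polynomial.aeval_def, aeval_eq_eval] using DFunLike.congr_fun this p

lemma coeff_restrictLine {R σ : Type*} [CommSemiring R] (z : σ → R) (p : MvPolynomial σ R) (n : ℕ) :
    (restrictLine z p).coeff n = eval z (homogeneousComponent n p) := by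
  classical
  induction p using MvPolynomial.induction_on' with
  | add p q hp hq => simp only [map_add, Polynomial.coeff_add, hp, hq]
  | monomial d c =>
    have restrict : restrictLine z (monomial d c)
        = Polynomial.monomial d.degree (eval z (monomial d c)) := by
      have hprod : (d.prod fun i k ↦ (Polynomial.C (z i) * Polynomial.X) ^ k)
          = Polynomial.C (d.prod fun i k ↦ z i ^ k) * Polynomial.X ^ d.degree := by
        simp [Finsupp.prod, mul_pow, Finset.prod_mul_distrib, Finset.prod_pow_eq_pow_sum,
          Finsupp.degree_apply]
      rw [restrictLine, aeval_monomial, hprod, eval_monomial, Polynomial.algebraMap_eq, ← mul_assoc,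
        ← map_mul, Polynomial.C_mul_X_pow_eq_monomial]
    rw [restrict, Polynomial.coeff_monomial,
      homogeneousComponent_of_mem (isHomogeneous_monomial c rfl)]
    simp only [eq_comm (a := n)]
    split_ifs <;> simp

lemma homogeneousComponent_totalDegree_ne_zero {R σ : Type*} [CommSemiring R]
    {p : MvPolynomial σ R} (hp : p ≠ 0) : homogeneousComponent p.totalDegree p ≠ 0 := by
  obtain ⟨d, hd, hdeg⟩ := Finset.exists_mem_eq_sup p.support (support_nonempty.2 hp)
    fun d ↦ d.sum fun _ e ↦ e
  refine ne_zero_iff.2 ⟨d, ?_⟩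
  rw [coeff_homogeneousComponent, if_pos (c := d.degree = p.totalDegree) hdeg.symm]
  exact mem_support_iff.1 hd

lemma exists_totalDegree_le_natDegree_restrictLine {R σ : Type*} [CommRing R] [IsDomain R]
    [Infinite R] {p : MvPolynomial σ R} (hp : p ≠ 0) :
    ∃ z, restrictLine z p ≠ 0 ∧ p.totalDegree ≤ (restrictLine z p).natDegree := by
  obtain ⟨z, hz⟩ : ∃ z, eval z (homogeneousComponent p.totalDegree p) ≠ 0 := by
    by_contra! hall
    exact homogeneousComponent_totalDegree_ne_zero hp (MvPolynomial.funext (by simpa using hall))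
  rw [← coeff_restrictLine] at hz
  exact ⟨z, fun h ↦ hz (by simp [h]), Polynomial.le_natDegree_of_ne_zero hz⟩

lemma totalDegree_le_of_polyGrowthLE {𝕜 σ : Type*} [NontriviallyNormedField 𝕜] [Fintype σ]
    {p : MvPolynomial σ 𝕜} {s : ℝ} (hs : 0 ≤ s) (h : PolyGrowthLE (fun z ↦ eval z p) s) :
    (p.totalDegree : ℝ) ≤ s := by
  obtain rfl | hp := eq_or_ne p 0
  · simpa using hs
  obtain ⟨z, hz, hdeg⟩ := exists_totalDegree_le_natDegree_restrictLine hp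
  refine (Nat.cast_le.2 hdeg).trans (PolyGrowthLE.natDegree_le hz ?_)
  simp only [eval_restrictLine]
  simpa [Function.comp_def] using
    h.comp (.of_continuousLinearMap ((ContinuousLinearMap.id 𝕜 𝕜).smulRight z)) hs

end MvPolynomial

/-- The map `f` is polynomial, with components the evaluations of the polynomials `p i`. Carrying
`p` along lets degree bounds be stated for the representing polynomials. -/
def HasPolyComponents {𝕜 σ τ : Type*} [CommSemiring 𝕜]
    (f : EuclideanSpace 𝕜 σ → EuclideanSpace 𝕜 τ) (p : τ → MvPolynomial σ 𝕜) : Prop :=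
  ∀ z i, f z i = MvPolynomial.eval (fun j ↦ z j) (p i)

namespace HasPolyComponents

lemma comp {𝕜 ρ σ τ : Type*} [CommSemiring 𝕜] {f : EuclideanSpace 𝕜 σ → EuclideanSpace 𝕜 τ}
    {h : EuclideanSpace 𝕜 ρ → EuclideanSpace 𝕜 σ} {p : τ → MvPolynomial σ 𝕜}
    {q : σ → MvPolynomial ρ 𝕜} (hf : HasPolyComponents f p) (hh : HasPolyComponents h q) :
    HasPolyComponents (f ∘ h) fun i ↦ MvPolynomial.bind₁ q (p i) := by
  intro z i
  rw [Function.comp_apply, hf, funext (hh z)]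
  simp only [MvPolynomial.eval, MvPolynomial.eval₂Hom_bind₁]

variable {𝕜 σ τ : Type*} [NontriviallyNormedField 𝕜] [Fintype σ] [Fintype τ]
  {f : EuclideanSpace 𝕜 σ → EuclideanSpace 𝕜 τ} {p : τ → MvPolynomial σ 𝕜} {s : ℝ}

lemma polyGrowthLE (hf : HasPolyComponents f p) (hs : 0 ≤ s)
    (hdeg : ∀ i, ((p i).totalDegree : ℝ) ≤ s) : PolyGrowthLE f s := by
  have growth : PolyGrowthLE (fun (z : σ → 𝕜) i ↦ MvPolynomial.eval z (p i)) s :=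
    .pi hs fun i ↦ (polyGrowthLE_eval (p i)).mono (hdeg i)
  let toPi := (PiLp.continuousLinearEquiv 2 𝕜 fun _ : σ ↦ 𝕜).toContinuousLinearMap
  let ofPi := (PiLp.continuousLinearEquiv 2 𝕜 fun _ : τ ↦ 𝕜).symm.toContinuousLinearMap
  have f_eq : f = ofPi ∘ (fun z i ↦ MvPolynomial.eval z (p i)) ∘ toPi := by
    ext z i
    exact hf z i
  rw [f_eq]
  simpa using (PolyGrowthLE.of_continuousLinearMap ofPi).comp
    (growth.comp (.of_continuousLinearMap toPi) hs) zero_le_one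

lemma totalDegree_le (hf : HasPolyComponents f p) (hs : 0 ≤ s) (h : PolyGrowthLE f s) (i : τ) :
    ((p i).totalDegree : ℝ) ≤ s := by
  let ofPi := (PiLp.continuousLinearEquiv 2 𝕜 fun _ : σ ↦ 𝕜).symm.toContinuousLinearMap
  have eval_eq : (fun z ↦ MvPolynomial.eval z (p i))
      = PiLp.proj (𝕜 := 𝕜) 2 _ i ∘ f ∘ ofPi :=
    funext fun z ↦ (hf (ofPi z) i).symm
  refine totalDegree_le_of_polyGrowthLE hs ?_
  rw [eval_eq]
  simpa using (PolyGrowthLE.of_continuousLinearMap (PiLp.proj (𝕜 := 𝕜) 2 (fun _ ↦ 𝕜) i)).comp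
    (h.comp (.of_continuousLinearMap ofPi) hs) zero_le_one

end HasPolyComponents

theorem comp_inverse_affine_preserves_green_general {𝕜 ι : Type*} [NontriviallyNormedField 𝕜]
    [Fintype ι] {f h : EuclideanSpace 𝕜 ι → EuclideanSpace 𝕜 ι} {p q : ι → MvPolynomial ι 𝕜}
    (hf : HasPolyComponents f p) (hh : HasPolyComponents h q)
    {df dg δf δg : ℝ} (hdf : 0 ≤ df) (hdg : 0 < dg) (hδf : 0 < δf) (hδg : 0 ≤ δg)
    (hdeg : ∀ i, ((q i).totalDegree : ℝ) ≤ δg) (hd : df < 2 * dg) (hδ : δg < 2 * δf)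
    {Gp Gm : EuclideanSpace 𝕜 ι → ℝ} {C : ℝ} (hGpf : ∀ z, Gp (f z) = df * Gp z)
    (hGph : ∀ z, Gp z = dg * Gp (h z)) (hGmf : ∀ z, Gm (f z) = δf⁻¹ * Gm z)
    (hgrowth : ∀ z, |max (Gp z) (Gm z) - log⁺ ‖z‖| ≤ C) :
    (∃ r : ι → MvPolynomial ι 𝕜,
      (∀ i, (r i).totalDegree ≤ 1) ∧ HasPolyComponents (f ∘ h) r) ∧
    ∀ z, Gp (f (h z)) = df / dg * Gp z := by
  have hGp (z : EuclideanSpace 𝕜 ι) : Gp (f (h z)) = df / dg * Gp z := by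
    rw [hGpf, hGph z]
    field_simp
  refine ⟨⟨_, fun i ↦ ?_, hf.comp hh⟩, hGp⟩
  have growth : PolyGrowthLE (f ∘ h) (max (df / dg) (δf⁻¹ * δg)) :=
    .comp_of_green (by positivity) (by positivity) (hh.polyGrowthLE hδg hdeg) hGp hGmf hgrowth
  have order_lt_two : max (df / dg) (δf⁻¹ * δg) < 2 :=
    max_lt ((div_lt_iff₀ hdg).2 hd) (by rwa [inv_mul_lt_iff₀ hδf, mul_comm])
  have degree_lt_two :=
    ((hf.comp hh).totalDegree_le (by positivity) growth i).trans_lt order_lt_two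
  exact Nat.lt_succ_iff.1 (mod_cast degree_lt_two)

/-- Analytic core of Lemma 2.2: if `f` is a polynomial bijection, `g` a bijection
whose inverse is a polynomial map of degree at most `δ_g`, with `d_f ≤ d_g`, `δ_g < 2·δ_f`,
and `G⁺`, `G⁻` are nonnegative functions satisfying the Green-function functional equations
and the growth bound `|max(G⁺,G⁻) − log⁺‖z‖| ≤ C₁`, then `f ∘ g⁻¹` is affine (each component
a polynomial of total degree at most 1) and `G⁺(f(g⁻¹(z))) = (d_f/d_g)·G⁺(z)`. -/
theorem comp_inverse_affine_preserves_green (k : ℕ) (hk : 1 ≤ k)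
    (f : EuclideanSpace ℂ (Fin k) → EuclideanSpace ℂ (Fin k))
    (g : EuclideanSpace ℂ (Fin k) ≃ EuclideanSpace ℂ (Fin k))
    (hf : Function.Bijective f)
    (pf : Fin k → MvPolynomial (Fin k) ℂ)
    (hpf : ∀ (z : EuclideanSpace ℂ (Fin k)) (i : Fin k),
      f z i = MvPolynomial.eval (fun j => z j) (pf i))
    (df dg δf δg : ℝ) (hdf : 1 < df) (hdg : 1 < dg) (hδf : 1 < δf) (hδg : 1 < δg)
    (pginv : Fin k → MvPolynomial (Fin k) ℂ)
    (hpginv : ∀ (z : EuclideanSpace ℂ (Fin k)) (i : Fin k),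
      g.symm z i = MvPolynomial.eval (fun j => z j) (pginv i))
    (hdegginv : ∀ i, ((pginv i).totalDegree : ℝ) ≤ δg)
    (hle : df ≤ dg) (hlt : δg < 2 * δf)
    (Gp Gm : EuclideanSpace ℂ (Fin k) → ℝ)
    (hGp0 : ∀ z, 0 ≤ Gp z) (hGm0 : ∀ z, 0 ≤ Gm z)
    (C₁ : ℝ) (hC₁ : 0 ≤ C₁)
    (hGpf : ∀ z, Gp (f z) = df * Gp z)
    (hGpg : ∀ z, Gp (g z) = dg * Gp z)
    (hGmf : ∀ z, Gm (f z) = δf⁻¹ * Gm z)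
    (hgrowth : ∀ z : EuclideanSpace ℂ (Fin k),
      |max (Gp z) (Gm z) - max (Real.log ‖z‖) 0| ≤ C₁) :
    (∃ q : Fin k → MvPolynomial (Fin k) ℂ,
      (∀ i, (q i).totalDegree ≤ 1) ∧
      ∀ (z : EuclideanSpace ℂ (Fin k)) (i : Fin k),
        f (g.symm z) i = MvPolynomial.eval (fun j => z j) (q i)) ∧
    ∀ z, Gp (f (g.symm z)) = (df / dg) * Gp z := by
  exact comp_inverse_affine_preserves_green_general hpf hpginv (by linarith) (by linarith)
    (by linarith) (by linarith) hdegginv (by linarith) hlt hGpf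
    (fun z ↦ by rw [← hGpg, g.apply_symm_apply]) hGmf fun z ↦ max_comm 0 (log ‖z‖) ▸ hgrowth z
end

section
/- Let k ≥ 1, let f : ℂ^k → ℂ^k be a bijection, let d > 1 be a real number, and suppose that for every z ∈ ℂ^k the limit G(z) := lim_{n→∞} d^{-n}·log⁺‖f^n(z)‖ exists. Let β be an affine automorphism of ℂ^k and let p ≥ 1 be an integer such that β⁻¹∘f^p∘β = f^p. Then G(β(z)) = G(z) for all z ∈ ℂ^k. -/
open Filter

/-!
Since `β` and `β⁻¹` grow at most linearly, each increases `log⁺‖·‖` by at most an additive constant.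
As `β` commutes with every `f^{pn}`, comparing `log⁺‖f^{pn}(β z)‖ = log⁺‖β(f^{pn} z)‖` with
`log⁺‖f^{pn} z‖` costs only that constant, which the factor `d^{-pn}` kills in the limit.
-/

open Real Function Topology

/-- The map `g` grows at most linearly. Constants of any sign are allowed. -/
def HasLinearGrowth {E F : Type*} [Norm E] [Norm F] (g : E → F) : Prop :=
  ∃ M c : ℝ, ∀ z, ‖g z‖ ≤ M * ‖z‖ + c

/-- `G` is the escape-rate (Green) function `lim d⁻ⁿ log⁺‖fⁿ(z)‖` of `f` at rate `d`; the limit is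
required to exist at every point. -/
def IsGreenFunction {E : Type*} [Norm E] (f : E → E) (d : ℝ) (G : E → ℝ) : Prop :=
  ∀ z, Tendsto (fun n : ℕ => (d ^ n)⁻¹ * log⁺ ‖f^[n] z‖) atTop (𝓝 (G z))

section Growth

variable {E F : Type*}

theorem HasLinearGrowth.exists_posLog_norm_le [SeminormedAddGroup E] [SeminormedAddGroup F]
    {g : E → F} (hg : HasLinearGrowth g) : ∃ C, ∀ z, log⁺ ‖g z‖ ≤ log⁺ ‖z‖ + C := by
  obtain ⟨M, c, hM⟩ := hg
  refine ⟨log 2 + log⁺ M + log⁺ c, fun z => ?_⟩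
  calc log⁺ ‖g z‖ ≤ log⁺ (M * ‖z‖ + c) := posLog_le_posLog (norm_nonneg _) (hM z)
    _ ≤ log 2 + log⁺ (M * ‖z‖) + log⁺ c := posLog_add
    _ ≤ log 2 + (log⁺ M + log⁺ ‖z‖) + log⁺ c := by gcongr; exact posLog_mul
    _ = log⁺ ‖z‖ + (log 2 + log⁺ M + log⁺ c) := by ring

variable {𝕜 : Type*} [NontriviallyNormedField 𝕜]

theorem hasLinearGrowth_continuousAffineMap [SeminormedAddCommGroup E] [NormedSpace 𝕜 E]
    [SeminormedAddCommGroup F] [NormedSpace 𝕜 F] (g : E →ᴬ[𝕜] F) : HasLinearGrowth g := by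
  refine ⟨‖g.contLinear‖, ‖g 0‖, fun z => ?_⟩
  calc ‖g z‖ = ‖g.contLinear z + g 0‖ := by rw [congrFun g.decomp z]; rfl
    _ ≤ ‖g.contLinear z‖ + ‖g 0‖ := norm_add_le _ _
    _ ≤ ‖g.contLinear‖ * ‖z‖ + ‖g 0‖ := by gcongr; exact g.contLinear.le_opNorm z

theorem exists_continuousAffineEquiv_toEquiv_eq [CompleteSpace 𝕜]
    [NormedAddCommGroup E] [NormedSpace 𝕜 E] [FiniteDimensional 𝕜 E]
    [NormedAddCommGroup F] [NormedSpace 𝕜 F] {β : E ≃ F} {A : E →ₗ[𝕜] F} {b : F}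
    (hβ : ∀ z, β z = A z + b) : ∃ B : E ≃ᴬ[𝕜] F, B.toEquiv = β := by
  let φ : E →ᵃ[𝕜] F := A.toAffineMap + AffineMap.const 𝕜 E b
  have hφ : ⇑φ = β := funext fun z => (hβ z).symm
  have hφ_bij : Bijective φ := hφ ▸ β.bijective
  exact ⟨(AffineEquiv.ofBijective hφ_bij).toContinuousAffineEquiv, Equiv.coe_fn_injective hφ⟩

end Growth

theorem IsGreenFunction.le_of_semiconj {E F : Type*} [SeminormedAddGroup E] [SeminormedAddGroup F]
    {f : E → E} {h : F → F} {g : E → F} {d : ℝ} {Gf : E → ℝ} {Gh : F → ℝ} {p : ℕ}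
    (hGf : IsGreenFunction f d Gf) (hGh : IsGreenFunction h d Gh) (hd : 1 < d) (hp : 0 < p)
    (hsemi : Semiconj g f^[p] h^[p]) (hg : HasLinearGrowth g) (z : E) : Gh (g z) ≤ Gf z := by
  obtain ⟨C, hC⟩ := hg.exists_posLog_norm_le
  have hmul : Tendsto (fun n : ℕ => p * n) atTop atTop := tendsto_id.const_mul_atTop' hp
  have hinv : Tendsto (fun n : ℕ => (d ^ n)⁻¹) atTop (𝓝 0) :=
    (tendsto_pow_atTop_atTop_of_one_lt hd).inv_tendsto_atTop
  have hupper : Tendsto (fun n : ℕ => (d ^ n)⁻¹ * log⁺ ‖f^[n] z‖ + (d ^ n)⁻¹ * C) atTop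
      (𝓝 (Gf z)) := by
    simpa only [zero_mul, add_zero] using (hGf z).add (hinv.mul_const C)
  refine le_of_tendsto_of_tendsto' ((hGh (g z)).comp hmul) (hupper.comp hmul) fun n => ?_
  have hiter : h^[p * n] (g z) = g (f^[p * n] z) := by
    simpa only [iterate_mul] using ((hsemi.iterate_right n).eq z).symm
  calc (d ^ (p * n))⁻¹ * log⁺ ‖h^[p * n] (g z)‖
      = (d ^ (p * n))⁻¹ * log⁺ ‖g (f^[p * n] z)‖ := by rw [hiter]
    _ ≤ (d ^ (p * n))⁻¹ * (log⁺ ‖f^[p * n] z‖ + C) := by gcongr; exact hC _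
    _ = (d ^ (p * n))⁻¹ * log⁺ ‖f^[p * n] z‖ + (d ^ (p * n))⁻¹ * C := mul_add _ _ _

theorem green_function_invariant_of_conjugating_iterate_general {E : Type*} [SeminormedAddGroup E]
    {f : E → E} {d : ℝ} (hd : 1 < d) {G : E → ℝ} (hG : IsGreenFunction f d G) {β : E ≃ E}
    (hβ : HasLinearGrowth β) (hβ_symm : HasLinearGrowth β.symm) {p : ℕ} (hp : 0 < p)
    (hconj : β.symm ∘ f^[p] ∘ β = f^[p]) (z : E) : G (β z) = G z := by
  have hsemi : Semiconj β f^[p] f^[p] :=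
    semiconj_iff_comp_eq.2 ((β.symm_comp_eq _ _).1 hconj).symm
  have hsemi_symm : Semiconj β.symm f^[p] f^[p] :=
    hsemi.inverse_left β.left_inv β.right_inv
  refine le_antisymm (hG.le_of_semiconj hG hd hp hsemi hβ z) ?_
  simpa only [β.symm_apply_apply] using hG.le_of_semiconj hG hd hp hsemi_symm hβ_symm (β z)

/-- if `G(z) = lim d^{-n} log⁺‖f^n(z)‖` exists for every `z`, `β` is an affine
automorphism of `ℂ^k`, and `β⁻¹ ∘ f^p ∘ β = f^p` for some integer `p ≥ 1`, then
`G(β(z)) = G(z)` for all `z`. -/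
theorem green_function_invariant_of_conjugating_iterate (k : ℕ) (hk : 1 ≤ k)
    (f : EuclideanSpace ℂ (Fin k) → EuclideanSpace ℂ (Fin k))
    (hf : Function.Bijective f)
    (d : ℝ) (hd : 1 < d)
    (G : EuclideanSpace ℂ (Fin k) → ℝ)
    (hG : ∀ z, Tendsto (fun n : ℕ => (d ^ n)⁻¹ * max (Real.log ‖f^[n] z‖) 0)
      atTop (nhds (G z)))
    (β : EuclideanSpace ℂ (Fin k) ≃ EuclideanSpace ℂ (Fin k))
    (A : EuclideanSpace ℂ (Fin k) →ₗ[ℂ] EuclideanSpace ℂ (Fin k))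
    (b : EuclideanSpace ℂ (Fin k))
    (hβ : ∀ z, β z = A z + b)
    (p : ℕ) (hp : 1 ≤ p)
    (hconj : ⇑β.symm ∘ f^[p] ∘ ⇑β = f^[p]) :
    ∀ z, G (β z) = G z := by
  obtain ⟨B, rfl⟩ := exists_continuousAffineEquiv_toEquiv_eq hβ
  have hGreen : IsGreenFunction f d G := fun z => by simpa only [posLog_apply, max_comm] using hG z
  exact green_function_invariant_of_conjugating_iterate_general hd hGreen
    (hasLinearGrowth_continuousAffineMap B.toContinuousAffineMap)
    (hasLinearGrowth_continuousAffineMap B.symm.toContinuousAffineMap) hp hconj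
end

section
/- Let F : ℂ³ → ℂ³ be the map F(x,y,z) = (y + x², z + y², x), and for a ∈ ℂ let β_a : ℂ³ → ℂ³ be the linear map β_a(x,y,z) = (a x, a² y, a⁴ z). If a⁷ = 1, then F∘β_a = β_{a²}∘F; consequently, for every n ∈ ℕ one has F^n∘β_a∘F^{-n} = β_{a^{2^n}}, so in particular F^n∘β_a∘F^{-n} is a linear (hence affine) map for every n, i.e. β_a belongs to N = {β an affine automorphism of ℂ³ : for all n ∈ ℕ, F^n∘β∘F^{-n} is affine}. -/
/-- The Hénon–Sibony map `F(x,y,z) = (y + x², z + y², x)` of `ℂ³`. -/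
def henonSibonyF : ℂ × ℂ × ℂ → ℂ × ℂ × ℂ :=
  fun p => (p.2.1 + p.1 ^ 2, p.2.2 + p.2.1 ^ 2, p.1)

/-- The inverse map `F⁻¹(x,y,z) = (z, x − z², y − (x − z²)²)`. -/
def henonSibonyFinv : ℂ × ℂ × ℂ → ℂ × ℂ × ℂ :=
  fun p => (p.2.2, p.1 - p.2.2 ^ 2, p.2.1 - (p.1 - p.2.2 ^ 2) ^ 2)

/-- The linear map `β_a(x,y,z) = (a x, a² y, a⁴ z)`. -/
def betaMap (a : ℂ) : ℂ × ℂ × ℂ → ℂ × ℂ × ℂ :=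
  fun p => (a * p.1, a ^ 2 * p.2.1, a ^ 4 * p.2.2)

/-- An affine map of `ℂ³`: a map of the form `p ↦ A p + b`. -/
def IsAffine3 (β : ℂ × ℂ × ℂ → ℂ × ℂ × ℂ) : Prop :=
  ∃ (A : (ℂ × ℂ × ℂ) →ₗ[ℂ] ℂ × ℂ × ℂ) (b : ℂ × ℂ × ℂ), ∀ p, β p = A p + b

/-- The set `N = {β affine automorphism of ℂ³ : ∀ n, Fⁿ∘β∘F⁻ⁿ is affine}`. -/
def NSet3 : Set (ℂ × ℂ × ℂ → ℂ × ℂ × ℂ) :=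
  {β | Function.Bijective β ∧ ∀ n : ℕ, IsAffine3 (henonSibonyF^[n] ∘ β ∘ henonSibonyFinv^[n])}

/-!
The first two coordinates of `F ∘ β_a` and `β_{a²} ∘ F` agree for every `a`, since the weights
`a, a², a⁴` of `β_a` double from one variable to the next; the third coordinates are `a x` and
`a⁸ x`. So `F` semiconjugates `β_a` to `β_{a²}` as soon as `a⁸ = a`, a condition that passes to all
powers of `a`. These semiconjugacies therefore chain along the iterates of `F`.
-/

open Function

theorem comp_comp_eq_of_semiconj_of_rightInverse {α β : Type*} {f : α → β} {f' : β → α}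
    {ga : α → α} {gb : β → β} (h : Semiconj f ga gb) (hf : RightInverse f' f) :
    f ∘ ga ∘ f' = gb := by
  rw [← comp_assoc, h.comp_eq, comp_assoc, hf.comp_eq_id, comp_id]

theorem rightInverse_henonSibonyFinv : RightInverse henonSibonyFinv henonSibonyF := by
  rintro ⟨x, y, z⟩
  simp [henonSibonyF, henonSibonyFinv]

/-- The map `β_a` as a `ℂ`-linear endomorphism of `ℂ³`, witnessing the linearity of `betaMap a`;
it is encoded as a product of multiplication maps of `ℂ`. -/
def betaLinearMap (a : ℂ) : (ℂ × ℂ × ℂ) →ₗ[ℂ] ℂ × ℂ × ℂ :=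
  (LinearMap.mulLeft ℂ a).prodMap
    ((LinearMap.mulLeft ℂ (a ^ 2)).prodMap (LinearMap.mulLeft ℂ (a ^ 4)))

theorem coe_betaLinearMap (a : ℂ) : ⇑(betaLinearMap a) = betaMap a :=
  rfl

theorem isAffine3_linearMap (A : (ℂ × ℂ × ℂ) →ₗ[ℂ] ℂ × ℂ × ℂ) : IsAffine3 A :=
  ⟨A, 0, fun p => (add_zero (A p)).symm⟩

theorem betaMap_bijective {a : ℂ} (ha : a ≠ 0) : Bijective (betaMap a) :=
  (mulLeft_bijective₀ a ha).prodMap <|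
    (mulLeft_bijective₀ (a ^ 2) (pow_ne_zero 2 ha)).prodMap <|
      mulLeft_bijective₀ (a ^ 4) (pow_ne_zero 4 ha)

theorem semiconj_henonSibonyF_betaMap {a : ℂ} (ha : a ^ 8 = a) :
    Semiconj henonSibonyF (betaMap a) (betaMap (a ^ 2)) := by
  rintro ⟨x, y, z⟩
  have last_coord : a * x = (a ^ 2) ^ 4 * x := by rw [← pow_mul, ha]
  simp only [henonSibonyF, betaMap, Prod.mk.injEq]
  exact ⟨by ring, by ring, last_coord⟩

theorem semiconj_iterate_henonSibonyF_betaMap {a : ℂ} (ha : a ^ 8 = a) (n : ℕ) :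
    Semiconj henonSibonyF^[n] (betaMap a) (betaMap (a ^ 2 ^ n)) := by
  have semiconj_succ (k : ℕ) :
      Semiconj henonSibonyF (betaMap (a ^ 2 ^ k)) (betaMap (a ^ 2 ^ (k + 1))) := by
    have pow_eight : (a ^ 2 ^ k) ^ 8 = a ^ 2 ^ k := by rw [pow_right_comm, ha]
    simpa only [← pow_mul, ← pow_succ] using semiconj_henonSibonyF_betaMap pow_eight
  simpa only [pow_zero, pow_one, add_zero] using
    Semiconj.iterate_left (g := fun k => betaMap (a ^ 2 ^ k)) semiconj_succ n 0

theorem henonSibonyF_iterate_conj_betaMap {a : ℂ} (ha : a ^ 8 = a) (n : ℕ) :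
    henonSibonyF^[n] ∘ betaMap a ∘ henonSibonyFinv^[n] = betaMap (a ^ 2 ^ n) :=
  comp_comp_eq_of_semiconj_of_rightInverse (semiconj_iterate_henonSibonyF_betaMap ha n)
    (rightInverse_henonSibonyFinv.iterate n)

/-- if `a⁷ = 1` then `F∘β_a = β_{a²}∘F`; consequently
`Fⁿ∘β_a∘F⁻ⁿ = β_{a^{2ⁿ}}` for all `n`, so each `Fⁿ∘β_a∘F⁻ⁿ` is linear (hence affine),
i.e. `β_a ∈ N`. -/
theorem betaMap_mem_NSet3 (a : ℂ) (ha : a ^ 7 = 1) :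
    henonSibonyF ∘ betaMap a = betaMap (a ^ 2) ∘ henonSibonyF ∧
    (∀ n : ℕ, henonSibonyF^[n] ∘ betaMap a ∘ henonSibonyFinv^[n] = betaMap (a ^ 2 ^ n)) ∧
    (∀ n : ℕ, ∃ A : (ℂ × ℂ × ℂ) →ₗ[ℂ] ℂ × ℂ × ℂ,
      ∀ p, (henonSibonyF^[n] ∘ betaMap a ∘ henonSibonyFinv^[n]) p = A p) ∧
    betaMap a ∈ NSet3 := by
  have pow_eight : a ^ 8 = a := by rw [pow_succ, ha, one_mul]
  have ne_zero : a ≠ 0 := (IsUnit.of_pow_eq_one ha (by decide)).ne_zero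
  have conj := henonSibonyF_iterate_conj_betaMap pow_eight
  have conj_linear (n : ℕ) :
      henonSibonyF^[n] ∘ betaMap a ∘ henonSibonyFinv^[n] = betaLinearMap (a ^ 2 ^ n) := by
    rw [conj n, coe_betaLinearMap]
  refine ⟨(semiconj_henonSibonyF_betaMap pow_eight).comp_eq, conj,
    fun n => ⟨betaLinearMap (a ^ 2 ^ n), congrFun (conj_linear n)⟩,
    betaMap_bijective ne_zero, fun n => ?_⟩
  rw [conj_linear n]
  exact isAffine3_linearMap _
end

section
/- Let F : ℂ³ → ℂ³ be the map F(x,y,z) = (y + x², z + y², x), with inverse F⁻¹(x,y,z) = (z, x − z², y − (x − z²)²). Let a, b, c, d, e, x₀, y₀, z₀ ∈ ℂ and let β : ℂ³ → ℂ³ be the affine map β(x,y,z) = (a x + b y + x₀, c x + d y + y₀, e z + z₀). Assume that β is a bijection (equivalently (a d − b c)·e ≠ 0), and that both F∘β∘F⁻¹ and F²∘β∘F⁻² are affine maps. Then b = 0, c = 0, x₀ = y₀ = z₀ = 0, d = a², e = a⁴, and a⁷ = 1; that is, β(x,y,z) = (a x, a² y, a⁴ z) with a⁷ = 1. -/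
open Function

section CommSemiring

variable {R : Type*} [CommSemiring R]

/-- The Hénon–Sibony map `F` over a commutative semiring; `henonSibonyF` is the case `R = ℂ`. -/
def henonSibony (p : R × R × R) : R × R × R :=
  (p.2.1 + p.1 ^ 2, p.2.2 + p.2.1 ^ 2, p.1)

/-- The affine map `p ↦ A p + t` of `R³`, where points of `R³` are encoded as triples rather than
as functions on `Fin 3`. -/
def affineOfMatrix (A : Matrix (Fin 3) (Fin 3) R) (t p : R × R × R) : R × R × R :=
  (A 0 0 * p.1 + A 0 1 * p.2.1 + A 0 2 * p.2.2 + t.1,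
    A 1 0 * p.1 + A 1 1 * p.2.1 + A 1 2 * p.2.2 + t.2.1,
    A 2 0 * p.1 + A 2 1 * p.2.1 + A 2 2 * p.2.2 + t.2.2)

end CommSemiring

theorem IsAffine3.exists_eq_affineOfMatrix {f : ℂ × ℂ × ℂ → ℂ × ℂ × ℂ} (hf : IsAffine3 f) :
    ∃ A t, f = affineOfMatrix A t := by
  obtain ⟨L, t, hf⟩ := hf
  refine ⟨!![(L (1, 0, 0)).1, (L (0, 1, 0)).1, (L (0, 0, 1)).1;
    (L (1, 0, 0)).2.1, (L (0, 1, 0)).2.1, (L (0, 0, 1)).2.1;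
    (L (1, 0, 0)).2.2, (L (0, 1, 0)).2.2, (L (0, 0, 1)).2.2], t, funext fun ⟨x, y, z⟩ => ?_⟩
  have basis_expansion :
      (x, y, z) = x • (1, 0, 0) + y • (0, 1, 0) + z • ((0, 0, 1) : ℂ × ℂ × ℂ) := by
    simp
  rw [hf, basis_expansion, map_add, map_add, map_smul, map_smul, map_smul]
  simp [affineOfMatrix, Prod.ext_iff, mul_comm]

theorem semiconj_conj_of_leftInverse {α : Type*} {f g : α → α} (h : LeftInverse g f)
    (β : α → α) : Semiconj f β (f ∘ β ∘ g) :=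
  fun p => congrArg (f ∘ β) (h p).symm

theorem henonSibonyFinv_leftInverse : LeftInverse henonSibonyFinv henonSibony :=
  fun p => by simp [henonSibony, henonSibonyFinv]

theorem exists_semiconj_affineOfMatrix {β : ℂ × ℂ × ℂ → ℂ × ℂ × ℂ}
    (h1 : IsAffine3 (henonSibonyF ∘ β ∘ henonSibonyFinv))
    (h2 : IsAffine3 (henonSibonyF^[2] ∘ β ∘ henonSibonyFinv^[2])) :
    ∃ B s C r, Semiconj henonSibony β (affineOfMatrix B s) ∧
      Semiconj henonSibony (affineOfMatrix B s) (affineOfMatrix C r) := by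
  obtain ⟨B, s, hB⟩ := h1.exists_eq_affineOfMatrix
  obtain ⟨C, r, hC⟩ := h2.exists_eq_affineOfMatrix
  refine ⟨B, s, C, r, ?_, ?_⟩
  · exact hB ▸ semiconj_conj_of_leftInverse henonSibonyFinv_leftInverse β
  · exact hB ▸ hC ▸ semiconj_conj_of_leftInverse henonSibonyFinv_leftInverse _

section NoZeroDivisors

variable {R : Type*} [CommRing R] [NoZeroDivisors R] [NeZero (2 : R)]

theorem bivariate_quadratic_coeffs_eq_zero {k l m p q o : R}
    (h : ∀ u v : R, k * u ^ 2 + l * v ^ 2 + m * u * v + p * u + q * v + o = 0) :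
    k = 0 ∧ l = 0 ∧ m = 0 ∧ p = 0 ∧ q = 0 ∧ o = 0 := by
  have eq_zero_of_two_mul {c : R} (hc : 2 * c = 0) : c = 0 :=
    (mul_eq_zero.1 hc).resolve_left two_ne_zero
  have ho : o = 0 := by linear_combination h 0 0
  have hk : k = 0 := eq_zero_of_two_mul (by linear_combination h 1 0 + h (-1) 0 - 2 * ho)
  have hl : l = 0 := eq_zero_of_two_mul (by linear_combination h 0 1 + h 0 (-1) - 2 * ho)
  have hp : p = 0 := by linear_combination h 1 0 - hk - ho
  have hq : q = 0 := by linear_combination h 0 1 - hl - ho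
  have hm : m = 0 := by linear_combination h 1 1 - hk - hl - hp - hq - ho
  exact ⟨hk, hl, hm, hp, hq, ho⟩

-- Each coordinate of `F ∘ β = β₁ ∘ F` has this shape; the right side is a row of `β₁` applied to
-- `F (u, v, w)`.
theorem coeffs_of_affine_add_sq_eq {k l m n p q o k' l' m' n' : R}
    (h : ∀ u v w : R, k * u + l * v + m * w + n + (p * u + q * v + o) ^ 2 =
      k' * (v + u ^ 2) + l' * (w + v ^ 2) + m' * u + n') :
    p * q = 0 ∧ l = p ^ 2 - 2 * q * o ∧ m = q ^ 2 ∧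
      k' = p ^ 2 ∧ l' = q ^ 2 ∧ m' = k + 2 * p * o ∧ n' = n + o ^ 2 := by
  obtain ⟨hk', hl', hpq, hm', hl, hn'⟩ := bivariate_quadratic_coeffs_eq_zero
    (k := p ^ 2 - k') (l := q ^ 2 - l') (m := 2 * (p * q)) (p := k + 2 * p * o - m')
    (q := l + 2 * q * o - k') (o := n + o ^ 2 - n') fun u v => by linear_combination h u v 0
  have hm : m = l' := by linear_combination h 0 0 1 - h 0 0 0
  refine ⟨(mul_eq_zero.1 hpq).resolve_left two_ne_zero, ?_, ?_, ?_, ?_, ?_, ?_⟩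
  · linear_combination hl - hk'
  · linear_combination hm - hl'
  · linear_combination -hk'
  · linear_combination -hl'
  · linear_combination -hm'
  · linear_combination -hn'

theorem exists_coeffs_of_semiconj_henonSibony {A B : Matrix (Fin 3) (Fin 3) R}
    {t s : R × R × R} (h : Semiconj henonSibony (affineOfMatrix A t) (affineOfMatrix B s)) :
    ∃ a c f x y z : R, c * a ^ 2 = 0 ∧
      A = !![a, 0, 0; c, a ^ 2, 0; f, c ^ 2 - 2 * a ^ 2 * y, a ^ 4] ∧ t = (x, y, z) ∧
      B = !![a ^ 2, 0, c + 2 * a * x; c ^ 2, a ^ 4, f + 2 * c * y; 0, 0, a] ∧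
      s = (y + x ^ 2, z + y ^ 2, x) := by
  obtain ⟨x, y, z⟩ := t
  have coords (u v w : R) := Prod.ext_iff.1 (h (u, v, w))
  simp only [henonSibony, affineOfMatrix, Prod.ext_iff] at coords
  have coord₃ (u v w : R) : A 0 0 * u + A 0 1 * v + A 0 2 * w + x + (0 * u + 0 * v + 0) ^ 2 =
      B 2 0 * (v + u ^ 2) + B 2 1 * (w + v ^ 2) + B 2 2 * u + s.2.2 := by
    linear_combination (coords u v w).2.2
  obtain ⟨-, hA01, hA02, hB20, hB21, hB22, hs2⟩ := coeffs_of_affine_add_sq_eq coord₃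
  simp only [zero_pow two_ne_zero, mul_zero, sub_self, add_zero] at hA01 hA02 hB20 hB21 hB22 hs2
  simp only [hA01, hA02] at coords
  have coord₁ (u v w : R) : A 1 0 * u + A 1 1 * v + A 1 2 * w + y + (A 0 0 * u + 0 * v + x) ^ 2 =
      B 0 0 * (v + u ^ 2) + B 0 1 * (w + v ^ 2) + B 0 2 * u + s.1 := by
    linear_combination (coords u v w).1
  obtain ⟨-, hA11, hA12, hB00, hB01, hB02, hs0⟩ := coeffs_of_affine_add_sq_eq coord₁
  simp only [zero_pow two_ne_zero, mul_zero, zero_mul, sub_zero] at hA11 hA12 hB01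
  simp only [hA11, hA12] at coords
  have coord₂ (u v w : R) :
      A 2 0 * u + A 2 1 * v + A 2 2 * w + z + (A 1 0 * u + A 0 0 ^ 2 * v + y) ^ 2 =
        B 1 0 * (v + u ^ 2) + B 1 1 * (w + v ^ 2) + B 1 2 * u + s.2.1 := by
    linear_combination (coords u v w).2.1
  obtain ⟨hca, hA21, hA22, hB10, hB11, hB12, hs1⟩ := coeffs_of_affine_add_sq_eq coord₂
  rw [← pow_mul] at hA22 hB11
  refine ⟨A 0 0, A 1 0, A 2 0, x, y, z, hca, ?_, rfl, ?_, ?_⟩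
  · ext i j; fin_cases i <;> fin_cases j <;> first | assumption | rfl
  · ext i j; fin_cases i <;> fin_cases j <;> assumption
  · ext <;> assumption

theorem exists_coeffs_of_injective_of_semiconj_henonSibony {A B : Matrix (Fin 3) (Fin 3) R}
    {t s : R × R × R} (hinj : Injective (affineOfMatrix A t))
    (h : Semiconj henonSibony (affineOfMatrix A t) (affineOfMatrix B s)) :
    ∃ a f x y z : R, a ≠ 0 ∧
      A = !![a, 0, 0; 0, a ^ 2, 0; f, -2 * a ^ 2 * y, a ^ 4] ∧ t = (x, y, z) ∧
      B = !![a ^ 2, 0, 2 * a * x; 0, a ^ 4, f; 0, 0, a] ∧ s = (y + x ^ 2, z + y ^ 2, x) := by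
  obtain ⟨a, c, f, x, y, z, hca, rfl, rfl, rfl, rfl⟩ := exists_coeffs_of_semiconj_henonSibony h
  have ha : a ≠ 0 := by
    rintro rfl
    have e₃_eq_zero : ((0, 0, 1) : R × R × R) = 0 := hinj (by simp [affineOfMatrix])
    have one_eq_zero : (1 : R) = 0 := congrArg (fun p => p.2.2) e₃_eq_zero
    exact two_ne_zero (by linear_combination 2 * one_eq_zero : (2 : R) = 0)
  obtain rfl : c = 0 := (mul_eq_zero.1 hca).resolve_right (pow_ne_zero 2 ha)
  exact ⟨a, f, x, y, z, ha, by simp, rfl, by simp, rfl⟩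

theorem NSet3_elements_are_diagonal_general {A B C : Matrix (Fin 3) (Fin 3) R}
    {t s r : R × R × R} (hinj : Injective (affineOfMatrix A t))
    (h1 : Semiconj henonSibony (affineOfMatrix A t) (affineOfMatrix B s))
    (h2 : Semiconj henonSibony (affineOfMatrix B s) (affineOfMatrix C r)) :
    ∃ a y : R, a ^ 7 = 1 ∧
      A = !![a, 0, 0; 0, a ^ 2, 0; 0, -2 * a ^ 2 * y, a ^ 4] ∧ t = (0, y, -y ^ 2) := by
  obtain ⟨a, f, x, y, z, ha, rfl, rfl, rfl, rfl⟩ :=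
    exists_coeffs_of_injective_of_semiconj_henonSibony hinj h1
  obtain ⟨a', c', f', x', y', z', -, hB, hs, -, -⟩ := exists_coeffs_of_semiconj_henonSibony h2
  obtain rfl : a ^ 2 = a' := congrFun₂ hB 0 0
  obtain rfl : 0 = c' := congrFun₂ hB 1 0
  obtain rfl : z + y ^ 2 = y' := congrArg (fun p => p.2.1) hs
  obtain rfl : f = 0 := congrFun₂ hB 1 2
  have h2ax : 2 * a * x = 0 := congrFun₂ hB 0 2
  have hyz : 0 = 0 ^ 2 - 2 * (a ^ 2) ^ 2 * (z + y ^ 2) := congrFun₂ hB 2 1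
  have ha8 : a = (a ^ 2) ^ 4 := congrFun₂ hB 2 2
  obtain rfl : x = 0 := (mul_eq_zero.1 h2ax).resolve_left (mul_ne_zero two_ne_zero ha)
  obtain rfl : z = -y ^ 2 := by
    have mul_eq : 2 * (a ^ 2) ^ 2 * (z + y ^ 2) = 0 := by linear_combination hyz
    refine eq_neg_of_add_eq_zero_left ((mul_eq_zero.1 mul_eq).resolve_left ?_)
    exact mul_ne_zero two_ne_zero (pow_ne_zero 2 (pow_ne_zero 2 ha))
  exact ⟨a, y, mul_left_cancel₀ ha (by linear_combination -ha8), rfl, rfl⟩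

theorem diagonal_of_blockTriangular {a b c d e x₀ y₀ z₀ α η : R} (hα : α ^ 7 = 1)
    (hA : !![a, b, 0; c, d, 0; 0, 0, e] =
      !![α, 0, 0; 0, α ^ 2, 0; 0, -2 * α ^ 2 * η, α ^ 4])
    (ht : (x₀, y₀, z₀) = (0, η, -η ^ 2)) :
    b = 0 ∧ c = 0 ∧ x₀ = 0 ∧ y₀ = 0 ∧ z₀ = 0 ∧ d = a ^ 2 ∧ e = a ^ 4 ∧ a ^ 7 = 1 := by
  obtain rfl : a = α := congrFun₂ hA 0 0
  obtain ⟨rfl, rfl, rfl⟩ : x₀ = 0 ∧ y₀ = η ∧ z₀ = -η ^ 2 := by simpa using ht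
  have hy : 0 = -2 * a ^ 2 * y₀ := congrFun₂ hA 2 1
  have two_mul_y : 2 * y₀ = 0 := by linear_combination a ^ 5 * hy - 2 * y₀ * hα
  obtain rfl : y₀ = 0 := (mul_eq_zero.1 two_mul_y).resolve_left two_ne_zero
  exact ⟨congrFun₂ hA 0 1, congrFun₂ hA 1 0, rfl, rfl, by simp, congrFun₂ hA 1 1,
    congrFun₂ hA 2 2, hα⟩

end NoZeroDivisors

/-- a block-triangular affine bijection
`β(x,y,z) = (a x + b y + x₀, c x + d y + y₀, e z + z₀)` such that both `F∘β∘F⁻¹` and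
`F²∘β∘F⁻²` are affine must be of the form `β(x,y,z) = (a x, a² y, a⁴ z)` with `a⁷ = 1`. -/
theorem NSet3_elements_are_diagonal (a b c d e x₀ y₀ z₀ : ℂ)
    (β : ℂ × ℂ × ℂ → ℂ × ℂ × ℂ)
    (hβ : ∀ p : ℂ × ℂ × ℂ,
      β p = (a * p.1 + b * p.2.1 + x₀, c * p.1 + d * p.2.1 + y₀, e * p.2.2 + z₀))
    (hbij : Function.Bijective β)
    (h1 : IsAffine3 (henonSibonyF ∘ β ∘ henonSibonyFinv))
    (h2 : IsAffine3 (henonSibonyF^[2] ∘ β ∘ henonSibonyFinv^[2])) :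
    b = 0 ∧ c = 0 ∧ x₀ = 0 ∧ y₀ = 0 ∧ z₀ = 0 ∧ d = a ^ 2 ∧ e = a ^ 4 ∧ a ^ 7 = 1 := by
  obtain ⟨B, s, C, r, hAB, hBC⟩ := exists_semiconj_affineOfMatrix h1 h2
  obtain rfl : β = affineOfMatrix !![a, b, 0; c, d, 0; 0, 0, e] (x₀, y₀, z₀) := by
    ext p <;> simp [hβ, affineOfMatrix]
  obtain ⟨α, η, hα, hA, ht⟩ := NSet3_elements_are_diagonal_general hbij.injective hAB hBC
  exact diagonal_of_blockTriangular hα hA ht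
end
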